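/- Let H₁, H₂ : 𝕋^n × ℝ^n → ℝ be continuous and satisfy (A1). Let (u₁, u₂) be a pair of upper semicontinuous functions on 𝕋^n × [0,∞) that is a viscosity subsolution of (C), and let (v₁, v₂) be a pair of lower semicontinuous functions on 𝕋^n × [0,∞) that is a viscosity supersolution of (C). If u_i(·,0) ≤ v_i(·,0) on 𝕋^n for i = 1,2, then u_i ≤ v_i on 𝕋^n × [0,∞) for i = 1,2. -/

import Mathlib

open MeasureTheory Filter Topology Set

noncomputable section

/-- Euclidean space `ℝ^n`; the torus `𝕋^n` is modelled by `ℤ^n`-periodic functions on it. -/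
abbrev En (n : ℕ) : Type := EuclideanSpace ℝ (Fin n)

/-- The integer vector `k ∈ ℤ^n` viewed as an element of `ℝ^n`. -/
def intVec (n : ℕ) (k : Fin n → ℤ) : En n := WithLp.toLp 2 (fun i => (k i : ℝ))

/-- A `ℤ^n`-periodic function on `ℝ^n`, i.e. a function on the torus `𝕋^n`. -/
def ZPeriodic {n : ℕ} (f : En n → ℝ) : Prop :=
  ∀ (x : En n) (k : Fin n → ℤ), f (x + intVec n k) = f x

/-- A Hamiltonian `H : 𝕋^n × ℝ^n → ℝ` (periodic in the first variable). -/
def ZPeriodicH {n : ℕ} (H : En n → En n → ℝ) : Prop :=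
  ∀ (x : En n) (k : Fin n → ℤ) (p : En n), H (x + intVec n k) p = H x p

/-- A function on `𝕋^n × ℝ` (space-time, periodic in space). -/
def ZPeriodicST {n : ℕ} (u : En n × ℝ → ℝ) : Prop :=
  ∀ (x : En n) (k : Fin n → ℤ) (t : ℝ), u (x + intVec n k, t) = u (x, t)

/-- (A1): coercivity, `lim_{r→∞} inf{H(x,p) : x ∈ 𝕋^n, |p| ≥ r} = ∞`. -/
def Coercive {n : ℕ} (H : En n → En n → ℝ) : Prop :=
  ∀ M : ℝ, ∃ r : ℝ, ∀ (x p : En n), r ≤ ‖p‖ → M ≤ H x p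

/-- Coercivity for an `x`-independent Hamiltonian. -/
def CoerciveP {n : ℕ} (H : En n → ℝ) : Prop :=
  ∀ M : ℝ, ∃ r : ℝ, ∀ p : En n, r ≤ ‖p‖ → M ≤ H p

/-- Lipschitz continuity (membership in `W^{1,∞}`). -/
def IsLip {n : ℕ} (f : En n → ℝ) : Prop := ∃ K : NNReal, LipschitzWith K f

/-- Viscosity subsolution inequality for one stationary equation
`H(x, Dw) + c (w - wo) ≤ ρ(x)` of a weakly coupled system. -/
def StatSubIneq {n : ℕ} (H : En n → En n → ℝ) (c : ℝ) (w wo : En n → ℝ) (ρ : En n → ℝ) : Prop :=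
  ∀ φ : En n → ℝ, ContDiff ℝ 1 φ →
    ∀ x₀ : En n, IsLocalMax (fun x => w x - φ x) x₀ →
      H x₀ (gradient φ x₀) + c * (w x₀ - wo x₀) ≤ ρ x₀

/-- Viscosity supersolution inequality for one stationary equation. -/
def StatSuperIneq {n : ℕ} (H : En n → En n → ℝ) (c : ℝ) (w wo : En n → ℝ) (ρ : En n → ℝ) : Prop :=
  ∀ φ : En n → ℝ, ContDiff ℝ 1 φ →
    ∀ x₀ : En n, IsLocalMin (fun x => w x - φ x) x₀ →
      ρ x₀ ≤ H x₀ (gradient φ x₀) + c * (w x₀ - wo x₀)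

/-- Viscosity subsolution of the stationary system
`Hᵢ(x, Dwᵢ) + cᵢ (wᵢ - wⱼ) = ρᵢ(x)`, `i = 1,2`. -/
def CellSub {n : ℕ} (H₁ H₂ : En n → En n → ℝ) (c₁ c₂ : ℝ) (w₁ w₂ : En n → ℝ)
    (ρ₁ ρ₂ : En n → ℝ) : Prop :=
  StatSubIneq H₁ c₁ w₁ w₂ ρ₁ ∧ StatSubIneq H₂ c₂ w₂ w₁ ρ₂

/-- Viscosity supersolution of the stationary system. -/
def CellSuper {n : ℕ} (H₁ H₂ : En n → En n → ℝ) (c₁ c₂ : ℝ) (w₁ w₂ : En n → ℝ)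
    (ρ₁ ρ₂ : En n → ℝ) : Prop :=
  StatSuperIneq H₁ c₁ w₁ w₂ ρ₁ ∧ StatSuperIneq H₂ c₂ w₂ w₁ ρ₂

/-- Viscosity solution (continuous, sub- and supersolution) of the stationary system. -/
def CellSolution {n : ℕ} (H₁ H₂ : En n → En n → ℝ) (c₁ c₂ : ℝ) (v₁ v₂ : En n → ℝ)
    (ρ₁ ρ₂ : En n → ℝ) : Prop :=
  Continuous v₁ ∧ Continuous v₂ ∧
    CellSub H₁ H₂ c₁ c₂ v₁ v₂ ρ₁ ρ₂ ∧ CellSuper H₁ H₂ c₁ c₂ v₁ v₂ ρ₁ ρ₂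

/-- Subsolution of the ergodic problem (E) with constant `c` (coupling constants 1). -/
def ErgSub {n : ℕ} (H₁ H₂ : En n → En n → ℝ) (v₁ v₂ : En n → ℝ) (c : ℝ) : Prop :=
  CellSub H₁ H₂ 1 1 v₁ v₂ (fun _ => c) (fun _ => c)

/-- Supersolution of the ergodic problem (E). -/
def ErgSuper {n : ℕ} (H₁ H₂ : En n → En n → ℝ) (v₁ v₂ : En n → ℝ) (c : ℝ) : Prop :=
  CellSuper H₁ H₂ 1 1 v₁ v₂ (fun _ => c) (fun _ => c)

/-- Viscosity solution of the ergodic problem (E):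
`H₁(x,Dv₁) + v₁ - v₂ = c`, `H₂(x,Dv₂) + v₂ - v₁ = c` on `𝕋^n`. -/
def ErgSolution {n : ℕ} (H₁ H₂ : En n → En n → ℝ) (v₁ v₂ : En n → ℝ) (c : ℝ) : Prop :=
  CellSolution H₁ H₂ 1 1 v₁ v₂ (fun _ => c) (fun _ => c)

/-- Viscosity subsolution inequality for one evolution equation
`∂ₜ u + H(x, Du) + u - uo ≤ 0` in `𝕋^n × (0,∞)`. -/
def EvolSubIneq {n : ℕ} (H : En n → En n → ℝ) (u uo : En n × ℝ → ℝ) : Prop :=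
  ∀ φ : En n × ℝ → ℝ, ContDiff ℝ 1 φ →
    ∀ (x₀ : En n) (t₀ : ℝ), 0 < t₀ →
      IsLocalMax (fun q => u q - φ q) (x₀, t₀) →
      fderiv ℝ φ (x₀, t₀) (0, 1) + H x₀ (gradient (fun y => φ (y, t₀)) x₀)
        + u (x₀, t₀) - uo (x₀, t₀) ≤ 0

/-- Viscosity supersolution inequality for one evolution equation. -/
def EvolSuperIneq {n : ℕ} (H : En n → En n → ℝ) (u uo : En n × ℝ → ℝ) : Prop :=
  ∀ φ : En n × ℝ → ℝ, ContDiff ℝ 1 φ →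
    ∀ (x₀ : En n) (t₀ : ℝ), 0 < t₀ →
      IsLocalMin (fun q => u q - φ q) (x₀, t₀) →
      0 ≤ fderiv ℝ φ (x₀, t₀) (0, 1) + H x₀ (gradient (fun y => φ (y, t₀)) x₀)
        + u (x₀, t₀) - uo (x₀, t₀)

/-- Viscosity subsolution of system (C) (with coupling constants `c₁ = c₂ = 1`). -/
def SysSub {n : ℕ} (H₁ H₂ : En n → En n → ℝ) (u₁ u₂ : En n × ℝ → ℝ) : Prop :=
  EvolSubIneq H₁ u₁ u₂ ∧ EvolSubIneq H₂ u₂ u₁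

/-- Viscosity supersolution of system (C). -/
def SysSuper {n : ℕ} (H₁ H₂ : En n → En n → ℝ) (u₁ u₂ : En n × ℝ → ℝ) : Prop :=
  EvolSuperIneq H₁ u₁ u₂ ∧ EvolSuperIneq H₂ u₂ u₁

/-- Viscosity solution of the Cauchy problem (C): continuous on `𝕋^n × [0,∞)`,
sub- and supersolution, attaining the initial data. -/
def SysSolution {n : ℕ} (H₁ H₂ : En n → En n → ℝ) (u₀₁ u₀₂ : En n → ℝ)
    (u₁ u₂ : En n × ℝ → ℝ) : Prop :=
  ContinuousOn u₁ {q : En n × ℝ | 0 ≤ q.2} ∧ ContinuousOn u₂ {q : En n × ℝ | 0 ≤ q.2} ∧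
    SysSub H₁ H₂ u₁ u₂ ∧ SysSuper H₁ H₂ u₁ u₂ ∧
    (∀ x, u₁ (x, 0) = u₀₁ x) ∧ (∀ x, u₂ (x, 0) = u₀₂ x)

/-- Viscosity subsolution of the single stationary equation `H(x,Dv) ≤ c` on `𝕋^n`. -/
def SingleSub {n : ℕ} (H : En n → En n → ℝ) (v : En n → ℝ) (c : ℝ) : Prop :=
  ∀ φ : En n → ℝ, ContDiff ℝ 1 φ →
    ∀ x₀ : En n, IsLocalMax (fun x => v x - φ x) x₀ → H x₀ (gradient φ x₀) ≤ c

/-- Viscosity supersolution of the single stationary equation `H(x,Dv) ≥ c` on `𝕋^n`. -/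
def SingleSuper {n : ℕ} (H : En n → En n → ℝ) (v : En n → ℝ) (c : ℝ) : Prop :=
  ∀ φ : En n → ℝ, ContDiff ℝ 1 φ →
    ∀ x₀ : En n, IsLocalMin (fun x => v x - φ x) x₀ → c ≤ H x₀ (gradient φ x₀)

/-- Viscosity solution of the single stationary equation `H(x,Dv) = c` on `𝕋^n`. -/
def SingleSolution {n : ℕ} (H : En n → En n → ℝ) (v : En n → ℝ) (c : ℝ) : Prop :=
  Continuous v ∧ SingleSub H v c ∧ SingleSuper H v c

/-- Uniform convergence `u(·,t) → v` on `𝕋^n` as `t → ∞`. -/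
def UnifTendsTo {n : ℕ} (u : En n × ℝ → ℝ) (v : En n → ℝ) : Prop :=
  ∀ ε : ℝ, 0 < ε → ∃ T : ℝ, ∀ t : ℝ, T ≤ t → ∀ x : En n, |u (x, t) - v x| ≤ ε

/-- (A8)⁺ at level `η` with constant `ψ`. -/
def A8plusAt {n : ℕ} (H : En n → En n → ℝ) (η ψ : ℝ) : Prop :=
  ∀ (x p q : En n), η ≤ H x (p + q) → H x q ≤ 0 →
    ∀ μ : ℝ, 0 < μ → μ ≤ 1 → H x (p + q) + ψ * (1 - μ) ≤ μ * H x (μ⁻¹ • p + q)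

/-- (A8)⁻ at level `η` with constant `ψ`. -/
def A8minusAt {n : ℕ} (H : En n → En n → ℝ) (η ψ : ℝ) : Prop :=
  ∀ (x p q : En n), H x (p + q) ≤ -η → 0 ≤ H x q →
    ∀ μ : ℝ, 1 ≤ μ → μ * H x (μ⁻¹ • p + q) ≤ H x (p + q) - ψ * (μ - 1) / μ

/-- (A8)⁺ with threshold `η₀`. -/
def A8plus {n : ℕ} (H : En n → En n → ℝ) (η₀ : ℝ) : Prop :=
  ∀ η : ℝ, 0 < η → η ≤ η₀ → ∃ ψ : ℝ, 0 < ψ ∧ A8plusAt H η ψ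

/-- (A8)⁻ with threshold `η₀`. -/
def A8minus {n : ℕ} (H : En n → En n → ℝ) (η₀ : ℝ) : Prop :=
  ∀ η : ℝ, 0 < η → η ≤ η₀ → ∃ ψ : ℝ, 0 < ψ ∧ A8minusAt H η ψ

/-- The function `F` of the Key Lemma: `F(r) = C r` for `r ≥ 0`, `F(r) = r / C` for `r < 0`. -/
def Fc (C r : ℝ) : ℝ := if 0 ≤ r then C * r else r / C

/-- `α_η⁺(s)` (resp. `β_η⁺(s)` with `u = u₂`):
`min_{x ∈ 𝕋^n, t ≥ s} (u(x,t) - v(x) + η (t-s)) / (u(x,s) - v(x))`. -/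
def alphaPlus {n : ℕ} (u : En n × ℝ → ℝ) (v : En n → ℝ) (η s : ℝ) : ℝ :=
  sInf {r : ℝ | ∃ (x : En n) (t : ℝ), s ≤ t ∧
    r = (u (x, t) - v x + η * (t - s)) / (u (x, s) - v x)}

/-- `α_η⁻(s)` (resp. `β_η⁻(s)` with `u = u₂`):
`max_{x ∈ 𝕋^n, t ≥ s} (u(x,t) - v(x) - η (t-s)) / (u(x,s) - v(x))`. -/
def alphaMinus {n : ℕ} (u : En n × ℝ → ℝ) (v : En n → ℝ) (η s : ℝ) : ℝ :=
  sSup {r : ℝ | ∃ (x : En n) (t : ℝ), s ≤ t ∧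
    r = (u (x, t) - v x - η * (t - s)) / (u (x, s) - v x)}

/-- (A9)⁺. -/
def A9plus {n : ℕ} (H : En n → En n → ℝ) : Prop :=
  ∃ K : Set (En n), IsClosed K ∧ (∀ x ∈ K, ∀ k : Fin n → ℤ, x + intVec n k ∈ K) ∧
    (∀ x ∈ K, (∀ p : En n, 0 ≤ H x p) ∧ ∃ p : En n, H x p = 0) ∧
    (∀ ε : ℝ, 0 < ε → ∃ η₀ : ℝ, 0 < η₀ ∧ ∃ ψ : ℝ → ℝ, (∀ r : ℝ, 0 < r → 0 < ψ r) ∧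
      ∀ η : ℝ, 0 < η → η ≤ η₀ → ∀ (x p q : En n), ε ≤ Metric.infDist x K →
        η ≤ H x (p + q) → H x q ≤ 0 →
        ∀ μ : ℝ, 0 < μ → μ ≤ 1 → H x (p + q) + ψ η * (1 - μ) ≤ μ * H x (μ⁻¹ • p + q))

/-- (A9)⁻. -/
def A9minus {n : ℕ} (H : En n → En n → ℝ) : Prop :=
  ∃ K : Set (En n), IsClosed K ∧ (∀ x ∈ K, ∀ k : Fin n → ℤ, x + intVec n k ∈ K) ∧
    (∀ x ∈ K, (∀ p : En n, 0 ≤ H x p) ∧ ∃ p : En n, H x p = 0) ∧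
    (∀ ε : ℝ, 0 < ε → ∃ η₀ : ℝ, 0 < η₀ ∧ ∃ ψ : ℝ → ℝ, (∀ r : ℝ, 0 < r → 0 < ψ r) ∧
      ∀ η : ℝ, 0 < η → η ≤ η₀ → ∀ (x p q : En n), ε ≤ Metric.infDist x K →
        H x (p + q) ≤ -η → 0 ≤ H x q →
        ∀ μ : ℝ, 1 ≤ μ → μ * H x (μ⁻¹ • p + q) ≤ H x (p + q) - ψ η * (μ - 1) / μ)

/-- (A6): uniform convexity of an `x`-independent Hamiltonian. -/
def UnifConvex {n : ℕ} (H : En n → ℝ) : Prop :=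
  ∃ α : ℝ, 0 < α ∧ ∀ᵐ q : En n ∂volume, DifferentiableAt ℝ H q ∧
    ∀ p : En n, H q + fderiv ℝ H q (p - q) + α * ‖p - q‖ ^ 2 ≤ H p

end

/-!
Suppose `uᵢ - vᵢ` is positive somewhere. Double the variables and maximise, over all components
`i` as well as over `(x, t)` and `(y, s)`,
`uᵢ(x,t) - vᵢ(y,s) - α|x - y|² - β(t - s)² - g(t) - g(s)`,
where `g` is increasing, small at the violation time and large one time unit later.
Periodicity makes the problem compact, and for large `α` and `β` the maximum is attained at
positive times.

The parameter `β` is fixed *before* `α → ∞`. The subsolution inequality then bounds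
`Hᵢ(x, p)`, `p = 2α(x - y)`, independently of `α`, so that coercivity keeps `p` in a fixed ball, on
which `Hᵢ` is uniformly continuous. Because the maximum is also over `i`, the coupling terms have
the right sign, and subtracting the two viscosity inequalities gives
`deriv g t + deriv g s ≤ Hᵢ(y, p) - Hᵢ(x, p)`. As `α → ∞` the right-hand side tends to `0` while the
left-hand side stays bounded away from it.
-/

/-! ### Semicontinuity and compactness -/

lemma upperSemicontinuousOn_sub_prod {X Y : Type*} [TopologicalSpace X] [TopologicalSpace Y]
    {u : X → ℝ} {v : Y → ℝ} {A : Set X} {B : Set Y}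
    (hu : UpperSemicontinuousOn u A) (hv : LowerSemicontinuousOn v B) :
    UpperSemicontinuousOn (fun z : X × Y => u z.1 - v z.2) (A ×ˢ B) := by
  have hneg : UpperSemicontinuousOn (fun y => -v y) B :=
    continuous_neg.comp_lowerSemicontinuousOn_antitone hv fun _ _ => neg_le_neg
  simpa only [sub_eq_add_neg, Function.comp_apply] using
    (hu.comp continuousOn_fst fun _ hz => hz.1).add (hneg.comp continuousOn_snd fun _ hz => hz.2)

lemma eventually_lt_of_forall_diag_lt {X : Type*} [MetricSpace X] {K : Set (X × X)}
    (hK : IsCompact K) {f : X × X → ℝ} (hf : UpperSemicontinuousOn f K) {κ : ℝ}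
    (hdiag : ∀ x, (x, x) ∈ K → f (x, x) < κ) :
    ∀ᶠ ρ in 𝓝[>] (0 : ℝ), ∀ z ∈ K, dist z.1 z.2 < ρ → f z < κ := by
  have hcompact : IsCompact (K ∩ f ⁻¹' Ici κ) := hf.isCompact_inter_preimage_Ici hK κ
  have hoff : ∀ z ∈ K ∩ f ⁻¹' Ici κ, 0 < dist z.1 z.2 := by
    rintro ⟨x, y⟩ ⟨hzK, hzκ⟩
    refine dist_pos.2 fun hxy : x = y => ?_
    subst hxy
    exact (hdiag x hzK).not_ge hzκ
  obtain ⟨a, ha, hle⟩ := hcompact.exists_forall_le' continuous_dist.continuousOn hoff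
  filter_upwards [Ioc_mem_nhdsGT ha] with ρ hρ z hzK hdist
  by_contra! hκ
  linarith [hle z ⟨hzK, hκ⟩, hρ.2]

lemma eventually_sub_lt_of_isCompact {X Y : Type*} [PseudoMetricSpace X] [PseudoMetricSpace Y]
    {f : X → Y → ℝ} (hf : Continuous fun q : X × Y => f q.1 q.2) {K : Set X} {L : Set Y}
    (hK : IsCompact K) (hL : IsCompact L) {ε : ℝ} (hε : 0 < ε) :
    ∀ᶠ δ in 𝓝[>] (0 : ℝ), ∀ x ∈ K, ∀ x', ∀ y ∈ L, dist x x' < δ → f x' y - f x y < ε := by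
  obtain ⟨η, hη, hunif⟩ := Metric.mem_uniformity_dist.1 <|
    (hK.prod hL).uniformContinuousAt_of_continuousAt _ (fun _ _ => hf.continuousAt)
      (Metric.dist_mem_uniformity hε)
  filter_upwards [Ioc_mem_nhdsGT hη] with δ hδ x hx x' y hy hxx'
  have hclose : dist (x, y) (x', y) < η := by
    simpa [Prod.dist_eq, hη] using hxx'.trans_le hδ.2
  have hdist : dist (f x y) (f x' y) < ε := hunif hclose ⟨hx, hy⟩
  rw [Real.dist_eq] at hdist
  linarith [(abs_lt.1 hdist).1]

lemma eventually_abs_lt_of_mul_sq_le (C : ℝ) {r : ℝ} (hr : 0 < r) :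
    ∀ᶠ a in atTop, ∀ d : ℝ, a * d ^ 2 ≤ C → |d| < r := by
  have hlarge : ∀ᶠ a : ℝ in atTop, C < a * r ^ 2 :=
    (tendsto_id.atTop_mul_const (pow_pos hr 2)).eventually_gt_atTop C
  filter_upwards [hlarge, eventually_gt_atTop 0] with a ha ha₀ d hd
  exact abs_lt_of_sq_lt_sq (lt_of_mul_lt_mul_left (hd.trans_lt ha) ha₀.le) hr.le

lemma Coercive.eventually_lt {n : ℕ} {H : En n → En n → ℝ} (hH : Coercive H) (K : ℝ) :
    ∀ᶠ R in atTop, ∀ x p : En n, R ≤ ‖p‖ → K < H x p := by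
  obtain ⟨r, hr⟩ := hH (K + 1)
  filter_upwards [eventually_ge_atTop r] with R hR x p hp
  linarith [hr x p (hR.trans hp)]

/-! ### Reduction to a compact set by periodicity -/

section Periodic

variable {n : ℕ}

lemma exists_norm_add_intVec_le (x : En n) : ∃ k : Fin n → ℤ, ‖x + intVec n k‖ ≤ √n := by
  refine ⟨fun i => -⌊x i⌋, ?_⟩
  have hcoord (i : Fin n) : (x + intVec n fun i => -⌊x i⌋) i = Int.fract (x i) := by
    simp [intVec, ← Int.self_sub_floor, sub_eq_add_neg]
  rw [EuclideanSpace.norm_eq]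
  refine Real.sqrt_le_sqrt ?_
  calc ∑ i, ‖(x + intVec n fun i => -⌊x i⌋) i‖ ^ 2
      ≤ ∑ _i : Fin n, (1 : ℝ) := by
        refine Finset.sum_le_sum fun i _ => ?_
        rw [hcoord, Real.norm_of_nonneg (Int.fract_nonneg _)]
        exact pow_le_one₀ (Int.fract_nonneg _) (Int.fract_lt_one _).le
    _ = n := by simp

lemma ZPeriodicST.eventually_forall_le {u : En n × ℝ → ℝ} (hper : ZPeriodicST u)
    (husc : UpperSemicontinuousOn u {q | 0 ≤ q.2}) (T : ℝ) :
    ∀ᶠ A in atTop, ∀ (x : En n), ∀ t ∈ Icc 0 T, u (x, t) ≤ A := by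
  have hK : IsCompact (Metric.closedBall (0 : En n) (√n) ×ˢ Icc 0 T) :=
    (isCompact_closedBall _ _).prod isCompact_Icc
  obtain ⟨A₀, hA₀⟩ := (husc.mono fun q hq => hq.2.1).bddAbove_of_isCompact hK
  filter_upwards [eventually_ge_atTop A₀] with A hA x t ht
  obtain ⟨k, hk⟩ := exists_norm_add_intVec_le x
  rw [← hper x k t]
  exact (hA₀ ⟨_, ⟨by simpa using hk, ht⟩, rfl⟩).trans hA

lemma ZPeriodicST.eventually_forall_neg_le {v : En n × ℝ → ℝ} (hper : ZPeriodicST v)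
    (hlsc : LowerSemicontinuousOn v {q | 0 ≤ q.2}) (T : ℝ) :
    ∀ᶠ B in atTop, ∀ (x : En n), ∀ t ∈ Icc 0 T, -v (x, t) ≤ B :=
  ZPeriodicST.eventually_forall_le (fun x k t => congrArg Neg.neg (hper x k t))
    (continuous_neg.comp_lowerSemicontinuousOn_antitone hlsc fun _ _ => neg_le_neg) T

/-- Pairs of space-time points `((x, t), (y, s))` with times in `[0, T]` and `|x - y| ≤ 1`: the
domain on which the doubled function is maximised. It is compact modulo the diagonal action of
`ℤ^n`. -/
def nearDiag (n : ℕ) (T : ℝ) : Set ((En n × ℝ) × (En n × ℝ)) :=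
  {z | z.1.2 ∈ Icc 0 T ∧ z.2.2 ∈ Icc 0 T ∧ ‖z.1.1 - z.2.1‖ ≤ 1}

/-- A compact subset of `nearDiag n T` meeting every orbit of the diagonal action of `ℤ^n`. -/
def nearDiagCell (n : ℕ) (T : ℝ) : Set ((En n × ℝ) × (En n × ℝ)) :=
  nearDiag n T ∩ {z | ‖z.1.1‖ ≤ √n}

lemma nearDiag_subset_nonneg (n : ℕ) (T : ℝ) :
    nearDiag n T ⊆ {q : En n × ℝ | 0 ≤ q.2} ×ˢ {q : En n × ℝ | 0 ≤ q.2} :=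
  fun _ hz => ⟨hz.1.1, hz.2.1.1⟩

lemma isCompact_nearDiagCell (n : ℕ) (T : ℝ) : IsCompact (nearDiagCell n T) := by
  have hbox : IsCompact ((Metric.closedBall (0 : En n) (√n) ×ˢ Icc 0 T) ×ˢ
      (Metric.closedBall (0 : En n) (√n + 1) ×ˢ Icc 0 T)) :=
    ((isCompact_closedBall _ _).prod isCompact_Icc).prod
      ((isCompact_closedBall _ _).prod isCompact_Icc)
  have hclosed : IsClosed (nearDiagCell n T) := by
    have htime₁ : Continuous fun z : (En n × ℝ) × (En n × ℝ) => z.1.2 := by fun_prop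
    have htime₂ : Continuous fun z : (En n × ℝ) × (En n × ℝ) => z.2.2 := by fun_prop
    have hspace : Continuous fun z : (En n × ℝ) × (En n × ℝ) => ‖z.1.1 - z.2.1‖ := by fun_prop
    have hnorm : Continuous fun z : (En n × ℝ) × (En n × ℝ) => ‖z.1.1‖ := by fun_prop
    exact ((isClosed_Icc.preimage htime₁).inter ((isClosed_Icc.preimage htime₂).inter
      (isClosed_Iic.preimage hspace))).inter (isClosed_Iic.preimage hnorm)
  refine hbox.of_isClosed_subset hclosed ?_
  rintro ⟨⟨x, t⟩, y, s⟩ ⟨⟨ht, hs, hxy⟩, hx⟩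
  simp only [mem_prod, mem_closedBall_zero_iff]
  exact ⟨⟨hx, ht⟩, by linarith [norm_le_norm_add_norm_sub' y x, norm_sub_rev y x, hx.out], hs⟩

lemma nearDiag_mem_nhds {T : ℝ} {x y : En n} {t s : ℝ} (ht : t ∈ Ioo 0 T) (hs : s ∈ Ioo 0 T)
    (hxy : ‖x - y‖ < 1) : nearDiag n T ∈ 𝓝 ((x, t), (y, s)) := by
  have hcont : Continuous fun z : (En n × ℝ) × (En n × ℝ) => ‖z.1.1 - z.2.1‖ := by fun_prop
  filter_upwards [
    (continuous_snd.comp continuous_fst).continuousAt.preimage_mem_nhds (Icc_mem_nhds ht.1 ht.2),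
    (continuous_snd.comp continuous_snd).continuousAt.preimage_mem_nhds (Icc_mem_nhds hs.1 hs.2),
    hcont.continuousAt.preimage_mem_nhds (Iic_mem_nhds hxy)] with z h₁ h₂ h₃
  exact ⟨h₁, h₂, h₃⟩

end Periodic

/-! ### Penalised doubling of variables -/

section Penalty

variable {E : Type*} [NormedAddCommGroup E]

/-- The penalty `α|x - y|² + β(t - s)² + g(t)` as a function of `q = (x, t)`, for a fixed
`c = (y, s)`. -/
noncomputable def penalty (α β : ℝ) (g : ℝ → ℝ) (c q : E × ℝ) : ℝ :=
  α * ‖q.1 - c.1‖ ^ 2 + β * (q.2 - c.2) ^ 2 + g q.2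

lemma penalty_neg (α β : ℝ) (g : ℝ → ℝ) (c q : E × ℝ) :
    penalty (-α) (-β) (-g) c q = -penalty α β g c q := by
  simp only [penalty, Pi.neg_apply]
  ring

/-- The doubled function `u(x,t) - v(y,s) - α|x - y|² - β(t - s)² - g(t) - g(s)` of
`z = ((x, t), (y, s))`. -/
noncomputable def doubled (u v : E × ℝ → ℝ) (α β : ℝ) (g : ℝ → ℝ)
    (z : (E × ℝ) × (E × ℝ)) : ℝ :=
  u z.1 - v z.2 - (penalty α β g z.2 z.1 + g z.2.2)

lemma doubled_eq_sub_penalty_snd (u v : E × ℝ → ℝ) (α β : ℝ) (g : ℝ → ℝ)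
    (z : (E × ℝ) × (E × ℝ)) :
    doubled u v α β g z = u z.1 - v z.2 - (penalty α β g z.1 z.2 + g z.1.2) := by
  simp only [doubled, penalty, norm_sub_rev z.2.1 z.1.1]
  ring

variable [InnerProductSpace ℝ E]

lemma contDiff_penalty (α β : ℝ) {g : ℝ → ℝ} (hg : ContDiff ℝ 1 g) (c : E × ℝ) :
    ContDiff ℝ 1 (penalty α β g c) :=
  ((contDiff_const.mul ((contDiff_fst.sub contDiff_const).norm_sq ℝ)).add
    (contDiff_const.mul ((contDiff_snd.sub contDiff_const).pow 2))).add (hg.comp contDiff_snd)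

lemma fderiv_penalty_time (α β : ℝ) {g : ℝ → ℝ} (hg : ContDiff ℝ 1 g) (c : E × ℝ) (x : E)
    (t : ℝ) : fderiv ℝ (penalty α β g c) (x, t) (0, 1) = 2 * β * (t - c.2) + deriv g t := by
  have hcurve : HasDerivAt (fun r : ℝ => penalty α β g c (x, r))
      (fderiv ℝ (penalty α β g c) (x, t) (0, 1)) t :=
    ((contDiff_penalty α β hg c).differentiable one_ne_zero _).hasFDerivAt.comp_hasDerivAt t
      ((hasDerivAt_const t x).prodMk (hasDerivAt_id t))
  have hquad : HasDerivAt (fun r : ℝ => α * ‖x - c.1‖ ^ 2 + β * (r - c.2) ^ 2)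
      (β * (2 * (t - c.2))) t := by
    simpa using
      ((((hasDerivAt_id t).sub_const c.2).pow 2).const_mul β).const_add (α * ‖x - c.1‖ ^ 2)
  have hexplicit := hquad.add (hg.differentiable one_ne_zero t).hasDerivAt
  rw [hcurve.unique hexplicit]
  ring

lemma gradient_penalty_space [CompleteSpace E] (α β : ℝ) (g : ℝ → ℝ) (c : E × ℝ) (x : E) (t : ℝ) :
    gradient (fun y => penalty α β g c (y, t)) x = (2 * α) • (x - c.1) := by
  refine HasGradientAt.gradient (hasGradientAt_iff_hasFDerivAt.2 ?_)
  have hsq := ((((hasFDerivAt_id x).sub_const c.1).norm_sq.const_mul α).add_const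
    (β * (t - c.2) ^ 2)).add_const (g t)
  convert! hsq using 1
  ext z
  simp only [map_smul, map_sub, smul_apply, sub_apply, InnerProductSpace.toDual_apply_apply,
    smul_eq_mul, id_eq, ContinuousLinearMap.comp_id, coe_innerSL_apply, nsmul_eq_mul,
    Nat.cast_ofNat]
  ring

end Penalty

section Doubling

variable {n : ℕ} {u v : En n × ℝ → ℝ} {α β : ℝ} {g : ℝ → ℝ}

lemma upperSemicontinuousOn_doubled (hu : UpperSemicontinuousOn u {q | 0 ≤ q.2})
    (hv : LowerSemicontinuousOn v {q | 0 ≤ q.2}) (hg : Continuous g) (T : ℝ) :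
    UpperSemicontinuousOn (doubled u v α β g) (nearDiag n T) := by
  have hpen : Continuous fun z : (En n × ℝ) × (En n × ℝ) =>
      -(penalty α β g z.2 z.1 + g z.2.2) := by
    simp only [penalty]
    fun_prop
  exact ((upperSemicontinuousOn_sub_prod hu hv).mono (nearDiag_subset_nonneg n T)).add
    (hpen.upperSemicontinuous.upperSemicontinuousOn _)

lemma doubled_add_intVec (hu : ZPeriodicST u) (hv : ZPeriodicST v) (k : Fin n → ℤ) (x y : En n)
    (t s : ℝ) : doubled u v α β g ((x + intVec n k, t), (y + intVec n k, s)) =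
      doubled u v α β g ((x, t), (y, s)) := by
  simp only [doubled, penalty, hu x k t, hv y k s, add_sub_add_right_eq_sub]

lemma exists_nearDiagCell_forall_doubled_le {ι : Type*} [Finite ι] [Nonempty ι]
    {u v : ι → En n × ℝ → ℝ} (huper : ∀ i, ZPeriodicST (u i)) (hvper : ∀ i, ZPeriodicST (v i))
    (hu : ∀ i, UpperSemicontinuousOn (u i) {q | 0 ≤ q.2})
    (hv : ∀ i, LowerSemicontinuousOn (v i) {q | 0 ≤ q.2}) (hg : Continuous g) (α β : ℝ) {T : ℝ}
    (hT : 0 ≤ T) :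
    ∃ i, ∃ z ∈ nearDiagCell n T, ∀ j, ∀ z' ∈ nearDiag n T,
      doubled (u j) (v j) α β g z' ≤ doubled (u i) (v i) α β g z := by
  have hne : (nearDiagCell n T).Nonempty :=
    ⟨((0, 0), (0, 0)), by simp [nearDiagCell, nearDiag, hT]⟩
  choose z hz hmax using fun i =>
    ((upperSemicontinuousOn_doubled (α := α) (β := β) (hu i) (hv i) hg T).mono
      inter_subset_left).exists_isMaxOn hne (isCompact_nearDiagCell n T)
  obtain ⟨i, hi⟩ := Finite.exists_max fun i => doubled (u i) (v i) α β g (z i)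
  refine ⟨i, z i, hz i, ?_⟩
  rintro j ⟨⟨x, t⟩, y, s⟩ ⟨ht, hs, hxy⟩
  obtain ⟨k, hk⟩ := exists_norm_add_intVec_le x
  have hmem : ((x + intVec n k, t), (y + intVec n k, s)) ∈ nearDiagCell n T :=
    ⟨⟨ht, hs, by simpa using hxy⟩, hk⟩
  rw [← doubled_add_intVec (huper j) (hvper j) k]
  exact (hmax j hmem).trans (hi j)

lemma EvolSubIneq.of_isLocalMax_doubled {H : En n → En n → ℝ} {w : En n × ℝ → ℝ}
    (hsub : EvolSubIneq H u w) (hg : ContDiff ℝ 1 g) {x y : En n} {t s : ℝ} (ht : 0 < t)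
    (hmax : IsLocalMax (doubled u v α β g) ((x, t), (y, s))) :
    2 * β * (t - s) + deriv g t + H x ((2 * α) • (x - y)) + u (x, t) - w (x, t) ≤ 0 := by
  have htest : IsLocalMax (fun q => u q - penalty α β g (y, s) q) (x, t) := by
    filter_upwards [hmax.comp_continuous (g := fun q => (q, (y, s))) (b := (x, t))
      (by fun_prop)] with q hq
    simp only [Function.comp_apply, doubled] at hq
    linarith
  simpa only [fderiv_penalty_time α β hg, gradient_penalty_space] using
    hsub _ (contDiff_penalty α β hg (y, s)) x t ht htest

lemma EvolSuperIneq.of_isLocalMax_doubled {H : En n → En n → ℝ} {w : En n × ℝ → ℝ}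
    (hsuper : EvolSuperIneq H v w) (hg : ContDiff ℝ 1 g) {x y : En n} {t s : ℝ} (hs : 0 < s)
    (hmax : IsLocalMax (doubled u v α β g) ((x, t), (y, s))) :
    0 ≤ 2 * β * (t - s) - deriv g s + H y ((2 * α) • (x - y)) + v (y, s) - w (y, s) := by
  have htest : IsLocalMin (fun q => v q - penalty (-α) (-β) (-g) (x, t) q) (y, s) := by
    filter_upwards [hmax.comp_continuous (g := fun q => ((x, t), q)) (b := (y, s))
      (by fun_prop)] with q hq
    simp only [Function.comp_apply, doubled_eq_sub_penalty_snd] at hq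
    simp only [penalty_neg]
    linarith
  have hineq := hsuper _ (contDiff_penalty (-α) (-β) hg.neg (x, t)) y s hs htest
  have hgrad : (2 * -α) • (y - x) = (2 * α) • (x - y) := by module
  rw [fderiv_penalty_time _ _ hg.neg, gradient_penalty_space, hgrad, deriv.fun_neg] at hineq
  linarith

end Doubling

lemma exists_time_barrier (τ : ℝ) {ε : ℝ} (hε : 0 < ε) (C : ℝ) :
    ∃ (g : ℝ → ℝ) (c : ℝ), 0 < c ∧ ContDiff ℝ 1 g ∧ (∀ t, 0 ≤ g t) ∧
      (∀ t, 0 ≤ t → c ≤ deriv g t) ∧ g τ ≤ ε ∧ C < g (τ + 1) := by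
  set l : ℝ := |C| / ε + 1
  have : 0 < l := by positivity
  have hderiv (t : ℝ) : deriv (fun t => ε * Real.exp (l * (t - τ))) t =
      ε * (Real.exp (l * (t - τ)) * l) := by
    simpa using ((((hasDerivAt_id t).sub_const τ).const_mul l).exp.const_mul ε).deriv
  refine ⟨fun t => ε * Real.exp (l * (t - τ)), ε * (Real.exp (l * (0 - τ)) * l), by positivity,
    by fun_prop, fun t => by positivity, fun t ht => ?_, by simp, ?_⟩
  · rw [hderiv]
    gcongr
  · calc C ≤ |C| := le_abs_self C
      _ < ε * (l + 1) := by
        have : ε * (|C| / ε) = |C| := mul_div_cancel₀ _ hε.ne'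
        simp only [l]
        linarith
      _ ≤ ε * Real.exp (l * (τ + 1 - τ)) := by
        rw [add_sub_cancel_left, mul_one]
        gcongr
        exact Real.add_one_le_exp l

/-! ### Comparison -/

section Comparison

variable {n : ℕ} {ι : Type*} {u v : ι → En n × ℝ → ℝ}

lemma eventually_time_pos_of_le_sub {u v : En n × ℝ → ℝ}
    (hu : UpperSemicontinuousOn u {q | 0 ≤ q.2}) (hv : LowerSemicontinuousOn v {q | 0 ≤ q.2})
    (hinit : ∀ x, u (x, 0) ≤ v (x, 0)) (T : ℝ) {κ : ℝ} (hκ : 0 < κ) :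
    ∀ᶠ ρ in 𝓝[>] (0 : ℝ), ∀ z ∈ nearDiagCell n T, dist z.1 z.2 < ρ →
      κ ≤ u z.1 - v z.2 → 0 < z.1.2 ∧ 0 < z.2.2 := by
  have hclosed : IsClosed {z : (En n × ℝ) × (En n × ℝ) | min z.1.2 z.2.2 ≤ 0} :=
    isClosed_le (by fun_prop) continuous_const
  have husc : UpperSemicontinuousOn (fun z => u z.1 - v z.2)
      (nearDiagCell n T ∩ {z | min z.1.2 z.2.2 ≤ 0}) :=
    (upperSemicontinuousOn_sub_prod hu hv).mono
      fun z hz => nearDiag_subset_nonneg n T hz.1.1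
  have hdiag : ∀ q : En n × ℝ, (q, q) ∈ nearDiagCell n T ∩ {z | min z.1.2 z.2.2 ≤ 0} →
      u q - v q < κ := by
    rintro ⟨x, t⟩ ⟨⟨⟨ht, -⟩, -⟩, hmin⟩
    obtain rfl : t = 0 := le_antisymm (by simpa using hmin) ht.1
    linarith [hinit x]
  filter_upwards [eventually_lt_of_forall_diag_lt
    ((isCompact_nearDiagCell n T).inter_right hclosed) husc hdiag] with ρ hρ z hz hdist hle
  refine lt_min_iff.1 ?_
  by_contra! hmin
  exact (hρ z ⟨hz, hmin⟩ hdist).not_ge hle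

/-- `z = ((x, t), (y, s))` is a local maximum of the `i`-th doubled function suited to the
comparison argument: `x` lies in a fixed ball and within `δ` of `y`, the times are positive, the
component `i` has the largest `u - v`, and `K` bounds from above what the subsolution inequality
gives for the Hamiltonian. -/
structure IsDoublingPoint (u v : ι → En n × ℝ → ℝ) (α β : ℝ) (g : ℝ → ℝ) (K δ : ℝ) (i : ι)
    (z : (En n × ℝ) × (En n × ℝ)) : Prop where
  norm_le : ‖z.1.1‖ ≤ √n
  norm_sub_lt : ‖z.1.1 - z.2.1‖ < δ
  time_fst_pos : 0 < z.1.2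
  time_snd_pos : 0 < z.2.2
  isLocalMax : IsLocalMax (doubled (u i) (v i) α β g) z
  sub_le_sub : ∀ j, u j z.1 - v j z.2 ≤ u i z.1 - v i z.2
  coupling_le : ∀ j, u j z.1 - u i z.1 - 2 * β * (z.1.2 - z.2.2) ≤ K

namespace IsDoublingPoint

variable {α β : ℝ} {g : ℝ → ℝ} {K δ : ℝ} {i j : ι} {z : (En n × ℝ) × (En n × ℝ)}
  {H : En n → En n → ℝ}

lemma hamiltonian_le (hz : IsDoublingPoint u v α β g K δ i z) (hg : ContDiff ℝ 1 g)
    (hderiv : 0 ≤ deriv g z.1.2) (hsub : EvolSubIneq H (u i) (u j)) :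
    H z.1.1 ((2 * α) • (z.1.1 - z.2.1)) ≤ K := by
  have hineq := hsub.of_isLocalMax_doubled hg hz.time_fst_pos hz.isLocalMax
  linarith [hz.coupling_le j]

lemma deriv_add_deriv_le (hz : IsDoublingPoint u v α β g K δ i z) (hg : ContDiff ℝ 1 g)
    (hsub : EvolSubIneq H (u i) (u j)) (hsuper : EvolSuperIneq H (v i) (v j)) :
    deriv g z.1.2 + deriv g z.2.2 ≤
      H z.2.1 ((2 * α) • (z.1.1 - z.2.1)) - H z.1.1 ((2 * α) • (z.1.1 - z.2.1)) := by
  have hlower := hsub.of_isLocalMax_doubled hg hz.time_fst_pos hz.isLocalMax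
  have hupper := hsuper.of_isLocalMax_doubled hg hz.time_snd_pos hz.isLocalMax
  linarith [hz.sub_le_sub j]

end IsDoublingPoint

lemma isDoublingPoint_of_forall_doubled_le {α β : ℝ} {g : ℝ → ℝ} {A B T κ ρ δ : ℝ} {i : ι}
    {z : (En n × ℝ) × (En n × ℝ)} (hα : 0 < α) (hβ : 0 < β) (hκ : 0 < κ)
    (hg : ∀ t, 0 ≤ g t) (hgT : A + B < g T)
    (hA : ∀ j x, ∀ t ∈ Icc 0 T, u j (x, t) ≤ A) (hB : ∀ j x, ∀ t ∈ Icc 0 T, -v j (x, t) ≤ B)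
    (hpos : ∀ j, ∀ w ∈ nearDiagCell n T, dist w.1 w.2 < ρ → κ ≤ u j w.1 - v j w.2 →
      0 < w.1.2 ∧ 0 < w.2.2)
    (hspace : ∀ d, α * d ^ 2 ≤ A + B → |d| < min ρ (min δ 1))
    (htime : ∀ d, β * d ^ 2 ≤ A + B → |d| < ρ)
    (hz : z ∈ nearDiagCell n T)
    (hmax : ∀ j, ∀ w ∈ nearDiag n T,
      doubled (u j) (v j) α β g w ≤ doubled (u i) (v i) α β g z)
    (hle : κ ≤ doubled (u i) (v i) α β g z) :
    IsDoublingPoint u v α β g (A + B + 2 * β * T) δ i z := by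
  obtain ⟨⟨x, t⟩, y, s⟩ := z
  have ⟨⟨ht, hs, _⟩, hx⟩ := hz
  have huA := hA i x t ht
  have hvB := hB i y s hs
  have hα_nonneg : 0 ≤ α * ‖x - y‖ ^ 2 := by positivity
  have hβ_nonneg : 0 ≤ β * (t - s) ^ 2 := by positivity
  have hgt := hg t
  have hgs := hg s
  have hle' := hle
  simp only [doubled, penalty] at hle'
  have hxy := hspace ‖x - y‖ (by linarith)
  rw [abs_norm, lt_min_iff, lt_min_iff] at hxy
  have hts := htime (t - s) (by linarith)
  have hdist : dist (x, t) (y, s) < ρ := by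
    rw [Prod.dist_eq, dist_eq_norm, Real.dist_eq]
    exact max_lt hxy.1 hts
  have ⟨ht₀, hs₀⟩ := hpos i _ hz hdist (by linarith)
  have htT : t < T := ht.2.lt_of_ne (by rintro rfl; linarith)
  have hsT : s < T := hs.2.lt_of_ne (by rintro rfl; linarith)
  refine ⟨hx, hxy.2.1, ht₀, hs₀, ?_, fun j => ?_, fun j => ?_⟩
  · filter_upwards [nearDiag_mem_nhds ⟨ht₀, htT⟩ ⟨hs₀, hsT⟩ hxy.2.2] with w hw using hmax i w hw
  · have hj := hmax j _ hz.1
    simp only [doubled] at hj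
    linarith
  · have htime_le : β * (s - t) ≤ β * T := by gcongr; linarith
    linarith [hA j x t ht]

lemma exists_isDoublingPoint [Finite ι]
    (huper : ∀ i, ZPeriodicST (u i)) (hvper : ∀ i, ZPeriodicST (v i))
    (husc : ∀ i, UpperSemicontinuousOn (u i) {q | 0 ≤ q.2})
    (hvlsc : ∀ i, LowerSemicontinuousOn (v i) {q | 0 ≤ q.2})
    (hinit : ∀ i x, u i (x, 0) ≤ v i (x, 0)) {i₀ : ι} {x₀ : En n} {t₀ : ℝ} (ht₀ : 0 ≤ t₀)
    (hviolation : v i₀ (x₀, t₀) < u i₀ (x₀, t₀)) :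
    ∃ (g : ℝ → ℝ) (c β K : ℝ), 0 < c ∧ ContDiff ℝ 1 g ∧ (∀ t, 0 ≤ t → c ≤ deriv g t) ∧
      ∀ δ, 0 < δ → ∃ α i z, IsDoublingPoint u v α β g K δ i z := by
  have : Nonempty ι := ⟨i₀⟩
  set κ := (u i₀ (x₀, t₀) - v i₀ (x₀, t₀)) / 2 with hκ_def
  have hκ : 0 < κ := half_pos (sub_pos.2 hviolation)
  set T := t₀ + 1
  have hT₀ : t₀ ∈ Icc 0 T := ⟨ht₀, (lt_add_one t₀).le⟩
  obtain ⟨A, hA⟩ := (eventually_all.2 fun i => (huper i).eventually_forall_le (husc i) T).exists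
  obtain ⟨B, hB⟩ :=
    (eventually_all.2 fun i => (hvper i).eventually_forall_neg_le (hvlsc i) T).exists
  obtain ⟨g, c, hc, hg, hg_nonneg, hg_deriv, hg_small, hg_large⟩ :=
    exists_time_barrier t₀ (half_pos hκ) (A + B)
  obtain ⟨ρ, hpos, hρ⟩ := ((eventually_all.2 fun i => eventually_time_pos_of_le_sub (husc i)
    (hvlsc i) (hinit i) T hκ).and self_mem_nhdsWithin).exists
  obtain ⟨β, htime, hβ⟩ :=
    ((eventually_abs_lt_of_mul_sq_le (A + B) hρ).and (eventually_gt_atTop 0)).exists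
  refine ⟨g, c, β, A + B + 2 * β * T, hc, hg, hg_deriv, fun δ hδ => ?_⟩
  obtain ⟨α, hspace, hα⟩ := ((eventually_abs_lt_of_mul_sq_le (A + B)
    (lt_min hρ (lt_min hδ one_pos))).and (eventually_gt_atTop 0)).exists
  obtain ⟨i, z, hz, hmax⟩ := exists_nearDiagCell_forall_doubled_le huper hvper husc hvlsc
    hg.continuous α β (hT₀.1.trans hT₀.2)
  have hviolation_le : κ ≤ doubled (u i₀) (v i₀) α β g ((x₀, t₀), (x₀, t₀)) := by
    simp only [doubled, penalty, sub_self, norm_zero]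
    linarith
  exact ⟨α, i, z, isDoublingPoint_of_forall_doubled_le hα hβ hκ hg_nonneg hg_large hA hB hpos
    hspace htime hz hmax (hviolation_le.trans (hmax i₀ _ ⟨hT₀, hT₀, by simp⟩))⟩

end Comparison

theorem stmt1_general {n : ℕ} {ι : Type*} [Finite ι] (partner : ι → ι) (H : ι → En n → En n → ℝ)
    (u v : ι → En n × ℝ → ℝ)
    (hHcont : ∀ i, Continuous fun q : En n × En n => H i q.1 q.2) (hHcoer : ∀ i, Coercive (H i))
    (huper : ∀ i, ZPeriodicST (u i)) (hvper : ∀ i, ZPeriodicST (v i))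
    (husc : ∀ i, UpperSemicontinuousOn (u i) {q | 0 ≤ q.2})
    (hvlsc : ∀ i, LowerSemicontinuousOn (v i) {q | 0 ≤ q.2})
    (hsub : ∀ i, EvolSubIneq (H i) (u i) (u (partner i)))
    (hsuper : ∀ i, EvolSuperIneq (H i) (v i) (v (partner i)))
    (hinit : ∀ i x, u i (x, 0) ≤ v i (x, 0)) (i : ι) (x : En n) (t : ℝ) (ht : 0 ≤ t) :
    u i (x, t) ≤ v i (x, t) := by
  by_contra! hviolation
  obtain ⟨g, c, β, K, hc, hg, hg_deriv, hpoint⟩ :=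
    exists_isDoublingPoint huper hvper husc hvlsc hinit ht hviolation
  obtain ⟨R, hR⟩ := (eventually_all.2 fun i => (hHcoer i).eventually_lt K).exists
  obtain ⟨δ, hmodulus, hδ⟩ := ((eventually_all.2 fun i => eventually_sub_lt_of_isCompact (hHcont i)
    (isCompact_closedBall (0 : En n) √n) (isCompact_closedBall (0 : En n) R) hc).and
      self_mem_nhdsWithin).exists
  obtain ⟨α, i, z, hz⟩ := hpoint δ hδ
  have hc₁ := hg_deriv _ hz.time_fst_pos.le
  have hc₂ := hg_deriv _ hz.time_snd_pos.le
  have hgrad : ‖(2 * α) • (z.1.1 - z.2.1)‖ < R := by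
    by_contra! hRle
    exact (hR i _ _ hRle).not_ge (hz.hamiltonian_le hg (hc.le.trans hc₁) (hsub i))
  have hsmall := hmodulus i _ (mem_closedBall_zero_iff.2 hz.norm_le) z.2.1 _
    (mem_closedBall_zero_iff.2 hgrad.le) (by simpa only [dist_eq_norm] using hz.norm_sub_lt)
  linarith [hz.deriv_add_deriv_le hg (hsub i) (hsuper i)]

/-- Comparison principle for system (C). -/
theorem stmt1 (n : ℕ) (hn : 1 ≤ n) (H₁ H₂ : En n → En n → ℝ)
    (hH₁cont : Continuous fun q : En n × En n => H₁ q.1 q.2)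
    (hH₂cont : Continuous fun q : En n × En n => H₂ q.1 q.2)
    (hH₁per : ZPeriodicH H₁) (hH₂per : ZPeriodicH H₂)
    (hH₁coer : Coercive H₁) (hH₂coer : Coercive H₂)
    (u₁ u₂ v₁ v₂ : En n × ℝ → ℝ)
    (hu₁per : ZPeriodicST u₁) (hu₂per : ZPeriodicST u₂)
    (hv₁per : ZPeriodicST v₁) (hv₂per : ZPeriodicST v₂)
    (hu₁usc : UpperSemicontinuousOn u₁ {q : En n × ℝ | 0 ≤ q.2})
    (hu₂usc : UpperSemicontinuousOn u₂ {q : En n × ℝ | 0 ≤ q.2})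
    (hv₁lsc : LowerSemicontinuousOn v₁ {q : En n × ℝ | 0 ≤ q.2})
    (hv₂lsc : LowerSemicontinuousOn v₂ {q : En n × ℝ | 0 ≤ q.2})
    (hsub : SysSub H₁ H₂ u₁ u₂) (hsuper : SysSuper H₁ H₂ v₁ v₂)
    (hinit₁ : ∀ x : En n, u₁ (x, 0) ≤ v₁ (x, 0))
    (hinit₂ : ∀ x : En n, u₂ (x, 0) ≤ v₂ (x, 0)) :
    ∀ (x : En n) (t : ℝ), 0 ≤ t → u₁ (x, t) ≤ v₁ (x, t) ∧ u₂ (x, t) ≤ v₂ (x, t) := by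
  intro x t ht
  have hle := stmt1_general ![1, 0] ![H₁, H₂] ![u₁, u₂] ![v₁, v₂]
    (Fin.forall_fin_two.2 ⟨hH₁cont, hH₂cont⟩) (Fin.forall_fin_two.2 ⟨hH₁coer, hH₂coer⟩)
    (Fin.forall_fin_two.2 ⟨hu₁per, hu₂per⟩) (Fin.forall_fin_two.2 ⟨hv₁per, hv₂per⟩)
    (Fin.forall_fin_two.2 ⟨hu₁usc, hu₂usc⟩) (Fin.forall_fin_two.2 ⟨hv₁lsc, hv₂lsc⟩)
    (Fin.forall_fin_two.2 hsub) (Fin.forall_fin_two.2 hsuper)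
    (Fin.forall_fin_two.2 ⟨hinit₁, hinit₂⟩)
  exact ⟨hle 0 x t ht, hle 1 x t ht⟩
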